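/- For every auction with n ≥ 1 agents having nonnegative, monotone, normalized valuations, there exists a Combinatorial Walrasian Equilibrium (X, p) whose revenue is at least (max_Z SW(Z))/(16·⌈log₂(2n)⌉), where the maximum is over all allocations Z; i.e., every valuation profile admits a CWE extracting revenue within an O(log n) factor of the optimal social welfare. -/

import Mathlib

open Finset

/-- A valuation is nonnegative, monotone, and normalized. -/
def ValidVal {ι : Type} [Fintype ι] [DecidableEq ι] (v : Finset ι → ℝ) : Prop :=
  (∀ S, 0 ≤ v S) ∧ (∀ S T : Finset ι, S ⊆ T → v S ≤ v T) ∧ v ∅ = 0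

/-- The agents' bundles are pairwise disjoint (the unallocated bundle `X₀` is the complement). -/
def IsAlloc {ι : Type} [Fintype ι] [DecidableEq ι] {n : ℕ} (X : Fin n → Finset ι) : Prop :=
  ∀ i j, i ≠ j → Disjoint (X i) (X j)

/-- The unallocated bundle `X₀` of an allocation. -/
def unalloc {ι : Type} [Fintype ι] [DecidableEq ι] {n : ℕ} (X : Fin n → Finset ι) : Finset ι :=
  Finset.univ \ Finset.univ.sup X

/-- `Γ(X)`: the nonempty bundles among `X₀, X₁, …, Xₙ`. -/
def Bundles {ι : Type} [Fintype ι] [DecidableEq ι] {n : ℕ} (X : Fin n → Finset ι) :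
    Finset (Finset ι) :=
  (insert (unalloc X) (Finset.image X Finset.univ)).erase ∅

/-- Quasilinear utility of a set `S` of bundles under bundle prices `p`. -/
def util {ι : Type} [Fintype ι] [DecidableEq ι] (v : Finset ι → ℝ) (p : Finset ι → ℝ)
    (S : Finset (Finset ι)) : ℝ :=
  v (S.sup id) - ∑ B ∈ S, p B

/-- The set of bundles assigned to agent `i`: `{Xᵢ}` if nonempty, else `∅`. -/
def own {ι : Type} [Fintype ι] [DecidableEq ι] {n : ℕ} (X : Fin n → Finset ι) (i : Fin n) :
    Finset (Finset ι) :=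
  if X i = ∅ then ∅ else {X i}

/-- Combinatorial Walrasian Equilibrium: an allocation together with nonnegative prices on the
bundles of `Γ(X)` such that each agent's own assignment maximizes his quasilinear utility
over all sets of bundles `S ⊆ Γ(X)`. -/
def IsCWE {ι : Type} [Fintype ι] [DecidableEq ι] {n : ℕ} (v : Fin n → Finset ι → ℝ)
    (X : Fin n → Finset ι) (p : Finset ι → ℝ) : Prop :=
  IsAlloc X ∧ (∀ B ∈ Bundles X, 0 ≤ p B) ∧
    ∀ i : Fin n, ∀ S ⊆ Bundles X, util (v i) p S ≤ util (v i) p (own X i)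

/-- Social welfare of an allocation. -/
def SW {ι : Type} [Fintype ι] [DecidableEq ι] {n : ℕ} (v : Fin n → Finset ι → ℝ)
    (X : Fin n → Finset ι) : ℝ :=
  ∑ i, v i (X i)

/-- Revenue of a priced allocation: the sum of prices of the allocated bundles. -/
def Revenue {ι : Type} [Fintype ι] [DecidableEq ι] {n : ℕ} (X : Fin n → Finset ι)
    (p : Finset ι → ℝ) : ℝ :=
  ∑ i ∈ Finset.univ.filter (fun i => X i ≠ ∅), p (X i)

/-!
Fix an optimal allocation `Z` and a threshold `q`, and treat as items only those bundles `Z j` whose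
agent values them above `q`. Give each item to a dummy owner who values it at exactly `q`, and run
an ascending auction: an agent without a bundle buys its favourite union of bundles for `ε` more
than their total price, and the bought bundles are merged for good. The total price rises by `ε` at
every purchase and is bounded, so the auction stops at an `ε`-equilibrium, and compactness gives
`ε = 0`. Prices never drop below `q` per item, while a dummy pays at most `q` for what it keeps. So
the agent `j` of an item `Z j` left with a dummy must hold something else, or it would buy that
dummy's bundle; hence at least half of the items are sold, and the revenue is at least `q / 2` per
item. Averaging over thresholds costs a harmonic number: if `t · #{j | t ≤ a j} ≤ M` for all `t`,
then the `k`-th largest `a j` is at most `M / k`.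
-/

section ThresholdSelection

theorem sum_le_harmonic_mul_of_card_mul_le {α : Type*} {s : Finset α} {a : α → ℝ} {M : ℝ}
    (ha : ∀ i ∈ s, 0 ≤ a i) (hM : ∀ i ∈ s, #{j ∈ s | a i ≤ a j} * a i ≤ M) :
    ∑ i ∈ s, a i ≤ harmonic #s * M := by
  classical
  induction s using Finset.induction_on_min_value a with
  | empty => simp
  | insert m s hm hmin ih =>
    have min_le : a m ≤ (#(insert m s) : ℝ)⁻¹ * M := by
      have count_eq : {j ∈ insert m s | a m ≤ a j} = insert m s :=
        filter_true_of_mem (forall_mem_insert _ _ _ |>.2 ⟨le_rfl, hmin⟩)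
      have h := hM m (mem_insert_self m s)
      rw [count_eq] at h
      rwa [inv_mul_eq_div, le_div_iff₀' (by simp)]
    have sum_le : ∑ i ∈ s, a i ≤ harmonic #s * M := by
      refine ih (fun i hi ↦ ha i (mem_insert_of_mem hi)) fun i hi ↦
        (mul_le_mul_of_nonneg_right ?_ (ha i (mem_insert_of_mem hi))).trans
          (hM i (mem_insert_of_mem hi))
      gcongr
      exact subset_insert m s
    rw [sum_insert hm]
    rw [card_insert_of_notMem hm] at min_le ⊢
    rw [harmonic_succ]
    push_cast at min_le ⊢
    linarith

theorem exists_nonneg_sum_le_harmonic_mul_card_mul {α : Type*} {s : Finset α} {a : α → ℝ}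
    (ha : ∀ i ∈ s, 0 ≤ a i) :
    ∃ t, 0 ≤ t ∧ ∑ i ∈ s, a i ≤ harmonic #s * (#{i ∈ s | t ≤ a i} * t) := by
  obtain rfl | hs := s.eq_empty_or_nonempty
  · exact ⟨0, le_rfl, by simp⟩
  · obtain ⟨m, hm, hmax⟩ := s.exists_max_image (fun i ↦ #{j ∈ s | a i ≤ a j} * a i) hs
    exact ⟨a m, ha m hm, sum_le_harmonic_mul_of_card_mul_le ha hmax⟩

theorem harmonic_le_clog_two_mul {n : ℕ} (hn : n ≠ 0) :
    (harmonic n : ℝ) ≤ Nat.clog 2 (2 * n) := by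
  have one_le_clog : 1 ≤ Nat.clog 2 (2 * n) := Nat.clog_pos one_lt_two (by lia)
  have log_le : Real.log n + Real.log 2 ≤ Nat.clog 2 (2 * n) * Real.log 2 := calc
    Real.log n + Real.log 2 = Real.log (2 * n) := by
      rw [Real.log_mul two_ne_zero (by positivity), add_comm]
    _ ≤ Real.log ((2 : ℝ) ^ Nat.clog 2 (2 * n)) :=
      Real.log_le_log (by positivity) (mod_cast Nat.le_pow_clog one_lt_two (2 * n))
    _ = Nat.clog 2 (2 * n) * Real.log 2 := Real.log_pow _ _
  have sub_one_mul_log_le : (Nat.clog 2 (2 * n) - 1 : ℝ) * Real.log 2 ≤ Nat.clog 2 (2 * n) - 1 :=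
    mul_le_of_le_one_right (sub_nonneg.2 (mod_cast one_le_clog))
      (by linarith [Real.log_two_lt_d9])
  linarith [harmonic_le_one_add_log n]

end ThresholdSelection

open Filter Topology in
theorem exists_forall_nonpos_of_forall_pos_exists_le {σ κ E : Type*} [Finite σ]
    [TopologicalSpace E] {K : σ → Set E} (hK : ∀ s, IsCompact (K s)) {f : σ → κ → E → ℝ}
    (hf : ∀ s k, Continuous (f s k)) (h : ∀ ε > 0, ∃ s, ∃ x ∈ K s, ∀ k, f s k x ≤ ε) :
    ∃ s, ∃ x ∈ K s, ∀ k, f s k x ≤ 0 := by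
  have ⟨s₁, x₁, _⟩ := h 1 one_pos
  have : Nonempty σ := ⟨s₁⟩
  have : Nonempty E := ⟨x₁⟩
  choose! s x hxK hfx using h
  let U : Ultrafilter ℝ := Ultrafilter.of (𝓝[>] 0)
  have hU : U ≤ 𝓝[>] (0 : ℝ) := Ultrafilter.of_le _
  have hpos : ∀ᶠ ε : ℝ in U, 0 < ε := hU self_mem_nhdsWithin
  obtain ⟨s₀, hs₀⟩ : ∃ s₀ : σ, ∀ᶠ ε : ℝ in U, s ε = s₀ :=
    Ultrafilter.eventually_exists_iff.1 (.of_forall fun ε ↦ ⟨s ε, rfl⟩)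
  have hmem : ∀ᶠ ε : ℝ in U, x ε ∈ K s₀ := by
    filter_upwards [hpos, hs₀] with ε hε hs
    exact hs ▸ hxK ε hε
  obtain ⟨x₀, hx₀, hlim⟩ : ∃ x₀ ∈ K s₀, Tendsto x U (𝓝 x₀) :=
    (hK s₀).ultrafilter_le_nhds' (U.map x) hmem
  refine ⟨s₀, x₀, hx₀, fun k ↦ ?_⟩
  refine le_of_tendsto_of_tendsto (((hf s₀ k).tendsto x₀).comp hlim)
    (tendsto_id.mono_left (hU.trans nhdsWithin_le_nhds)) ?_
  filter_upwards [hpos, hs₀] with ε hε hs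
  exact hs ▸ hfx ε hε k

section Market

variable {κ β : Type*} [DecidableEq β]

/-- The owners after `c` acquires all bundles of `A`; `g k` is the current owner of item `k`. -/
def mergeOwner (g : κ → β) (A : Finset β) (c : β) (k : κ) : β :=
  if g k ∈ A then c else g k

/-- The bundle prices after `c` acquires all bundles of `A`, paying `ε` on top of the sum of their
current prices. -/
def mergePrice (π : β → ℝ) (A : Finset β) (c : β) (ε : ℝ) (b : β) : ℝ :=
  (if b ∈ A then 0 else π b) + if b = c then ∑ a ∈ A, π a + ε else 0

theorem sum_mergePrice (π : β → ℝ) (A : Finset β) (c : β) (ε : ℝ) (B : Finset β) :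
    ∑ b ∈ B, mergePrice π A c ε b =
      ∑ b ∈ B \ A, π b + if c ∈ B then ∑ a ∈ A, π a + ε else 0 := by
  simp only [mergePrice, sum_add_distrib, sum_ite_eq', sum_ite, sum_const_zero, zero_add,
    filter_notMem_eq_sdiff]

theorem sum_mergePrice_of_mem {B : Finset β} {c : β} (π : β → ℝ) (A : Finset β) (hc : c ∈ B)
    (ε : ℝ) : ∑ b ∈ B, mergePrice π A c ε b = ∑ b ∈ B ∪ A, π b + ε := by
  rw [sum_mergePrice, if_pos hc, ← sdiff_union_self_eq_union, sum_union sdiff_disjoint, add_assoc]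

theorem sum_mergePrice_of_notMem {B : Finset β} {c : β} (π : β → ℝ) (A : Finset β) (hc : c ∉ B)
    (ε : ℝ) : ∑ b ∈ B, mergePrice π A c ε b = ∑ b ∈ B \ A, π b := by
  rw [sum_mergePrice, if_neg hc, add_zero]

variable [Fintype κ]

/-- The items held by the owners in `B`, where `g k` is the owner of item `k`. -/
def itemsOf (g : κ → β) (B : Finset β) : Finset κ := {k | g k ∈ B}

/-- The quasilinear utility of acquiring everything held by the owners in `B`, where `π b` is the
price of the whole bundle held by `b`. -/
def ownerUtil (u : Finset κ → ℝ) (g : κ → β) (π : β → ℝ) (B : Finset β) : ℝ :=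
  u (itemsOf g B) - ∑ b ∈ B, π b

/-- Bundle prices that charge at least the reserve price `q` per item; an owner without items has
the empty bundle, at price `0`. -/
structure IsReservePricing (q : ℝ) (g : κ → β) (π : β → ℝ) : Prop where
  reserve_le : ∀ b, q * #(itemsOf g {b}) ≤ π b
  eq_zero : ∀ b ∉ Set.range g, π b = 0

/-- An intermediate state of the ascending auction: every owner that holds an item prefers its own
bundle, up to `ε`, to every union of bundles. Nothing is asked of the owners without items. -/
structure IsPartialEquilibrium (w : β → Finset κ → ℝ) (q ε : ℝ) (g : κ → β) (π : β → ℝ) : Prop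
    extends IsReservePricing q g π where
  stable : ∀ b ∈ Set.range g, ∀ B, ownerUtil (w b) g π B ≤ ownerUtil (w b) g π {b} + ε

/-- An `ε`-equilibrium with reserve price `q` per item: every owner, with or without items, prefers
its own bundle, up to `ε`, to every union of bundles. -/
structure IsEquilibrium (w : β → Finset κ → ℝ) (q ε : ℝ) (g : κ → β) (π : β → ℝ) : Prop
    extends IsReservePricing q g π where
  stable : ∀ b B, ownerUtil (w b) g π B ≤ ownerUtil (w b) g π {b} + ε

variable {w : β → Finset κ → ℝ} {q ε : ℝ} {g : κ → β} {π : β → ℝ} {A B : Finset β} {b c : β}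

theorem itemsOf_empty (g : κ → β) : itemsOf g ∅ = ∅ := by
  simp [itemsOf]

theorem itemsOf_insert_of_notMem_range (hc : c ∉ Set.range g) (B : Finset β) :
    itemsOf g (insert c B) = itemsOf g B := by
  refine filter_congr fun k _ ↦ ?_
  rw [mem_insert, or_iff_right fun hk ↦ hc ⟨k, hk⟩]

theorem card_itemsOf (g : κ → β) (B : Finset β) : #(itemsOf g B) = ∑ b ∈ B, #(itemsOf g {b}) := by
  rw [card_eq_sum_card_fiberwise (f := g) (t := B) fun k hk ↦ by simpa [itemsOf] using hk]
  refine sum_congr rfl fun b hb ↦ congrArg card ?_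
  grind [itemsOf]

theorem itemsOf_mergeOwner_of_mem (g : κ → β) (A : Finset β) (hc : c ∈ B) :
    itemsOf (mergeOwner g A c) B = itemsOf g (B ∪ A) :=
  filter_congr fun k _ ↦ by grind [mergeOwner]

theorem itemsOf_mergeOwner_of_notMem (g : κ → β) (A : Finset β) (hc : c ∉ B) :
    itemsOf (mergeOwner g A c) B = itemsOf g (B \ A) :=
  filter_congr fun k _ ↦ by grind [mergeOwner]

theorem ownerUtil_empty (u : Finset κ → ℝ) (g : κ → β) (π : β → ℝ) : ownerUtil u g π ∅ = u ∅ := by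
  rw [ownerUtil, itemsOf_empty, sum_empty, sub_zero]

theorem continuous_ownerUtil (u : Finset κ → ℝ) (g : κ → β) (B : Finset β) :
    Continuous fun π ↦ ownerUtil u g π B := by
  unfold ownerUtil
  fun_prop

theorem ownerUtil_merge_of_mem (u : Finset κ → ℝ) (g : κ → β) (π : β → ℝ) (A : Finset β)
    (hc : c ∈ B) (ε : ℝ) :
    ownerUtil u (mergeOwner g A c) (mergePrice π A c ε) B = ownerUtil u g π (B ∪ A) - ε := by
  rw [ownerUtil, ownerUtil, itemsOf_mergeOwner_of_mem g A hc, sum_mergePrice_of_mem π A hc,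
    sub_sub]

theorem ownerUtil_merge_of_notMem (u : Finset κ → ℝ) (g : κ → β) (π : β → ℝ) (A : Finset β)
    (hc : c ∉ B) (ε : ℝ) :
    ownerUtil u (mergeOwner g A c) (mergePrice π A c ε) B = ownerUtil u g π (B \ A) := by
  rw [ownerUtil, ownerUtil, itemsOf_mergeOwner_of_notMem g A hc, sum_mergePrice_of_notMem π A hc]

theorem exists_ownerUtil_merge_le (u : Finset κ → ℝ) (g : κ → β) (π : β → ℝ) (A : Finset β)
    (c : β) (hε : 0 ≤ ε) (B : Finset β) :
    ∃ B', ownerUtil u (mergeOwner g A c) (mergePrice π A c ε) B ≤ ownerUtil u g π B' := by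
  by_cases hc : c ∈ B
  · exact ⟨B ∪ A, by linarith [ownerUtil_merge_of_mem u g π A hc ε]⟩
  · exact ⟨B \ A, (ownerUtil_merge_of_notMem u g π A hc ε).le⟩

namespace IsReservePricing

theorem mul_card_le_sum (h : IsReservePricing q g π) (B : Finset β) :
    q * #(itemsOf g B) ≤ ∑ b ∈ B, π b := by
  rw [card_itemsOf, Nat.cast_sum, mul_sum]
  exact sum_le_sum fun b _ ↦ h.reserve_le b

theorem nonneg (h : IsReservePricing q g π) (hq : 0 ≤ q) (b : β) : 0 ≤ π b :=
  (mul_nonneg hq (Nat.cast_nonneg _)).trans (h.reserve_le b)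

theorem ownerUtil_insert (h : IsReservePricing q g π) (u : Finset κ → ℝ)
    (hc : c ∉ Set.range g) (B : Finset β) : ownerUtil u g π (insert c B) = ownerUtil u g π B := by
  rw [ownerUtil, ownerUtil, itemsOf_insert_of_notMem_range hc, sum_insert_zero (h.eq_zero c hc)]

theorem merge (h : IsReservePricing q g π) (hA : ∃ k, g k ∈ A) (hε : 0 ≤ ε) (c : β) :
    IsReservePricing q (mergeOwner g A c) (mergePrice π A c ε) where
  reserve_le b := by
    rw [← sum_singleton (mergePrice π A c ε) b]
    by_cases hc : c ∈ ({b} : Finset β)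
    · rw [itemsOf_mergeOwner_of_mem g A hc, sum_mergePrice_of_mem π A hc]
      linarith [h.mul_card_le_sum ({b} ∪ A)]
    · rw [itemsOf_mergeOwner_of_notMem g A hc, sum_mergePrice_of_notMem π A hc]
      exact h.mul_card_le_sum ({b} \ A)
  eq_zero b hb := by
    obtain ⟨k, hk⟩ := hA
    have hc : c ∉ ({b} : Finset β) := fun hc ↦
      hb ⟨k, (if_pos hk).trans (mem_singleton.1 hc)⟩
    rw [← sum_singleton (mergePrice π A c ε) b, sum_mergePrice_of_notMem π A hc]
    refine sum_eq_zero fun a ha ↦ h.eq_zero a ?_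
    rintro ⟨l, rfl⟩
    obtain ⟨hl, hlA⟩ := mem_sdiff.1 ha
    exact hb ⟨l, (if_neg hlA).trans (mem_singleton.1 hl)⟩

theorem isCompact_setOf_le (hq : 0 ≤ q) (g : κ → β) (M : β → ℝ) :
    IsCompact {π | IsReservePricing q g π ∧ π ≤ M} := by
  have eq_inter : {π | IsReservePricing q g π ∧ π ≤ M} =
      (⋂ b, {π | q * #(itemsOf g {b}) ≤ π b}) ∩ (⋂ b ∉ Set.range g, {π | π b = 0}) ∩ Set.Iic M := by
    ext π
    simpa using fun _ ↦ ⟨fun h ↦ ⟨h.reserve_le, by simpa using h.eq_zero⟩,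
      fun h ↦ ⟨h.1, by simpa using h.2⟩⟩
  have closed : IsClosed {π | IsReservePricing q g π ∧ π ≤ M} := by
    rw [eq_inter]
    exact ((isClosed_iInter fun b ↦ isClosed_le continuous_const (continuous_apply b)).inter
      (isClosed_iInter fun b ↦ isClosed_iInter fun _ ↦
        isClosed_eq (continuous_apply b) continuous_const)).inter isClosed_Iic
  exact isCompact_Icc.of_isClosed_subset closed fun π hπ ↦ ⟨hπ.1.nonneg hq, hπ.2⟩

end IsReservePricing

theorem IsEquilibrium.isPartialEquilibrium (h : IsEquilibrium w q ε g π) :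
    IsPartialEquilibrium w q ε g π where
  toIsReservePricing := h.toIsReservePricing
  stable b _ := h.stable b

namespace IsPartialEquilibrium

theorem mono {δ : ℝ} (h : IsPartialEquilibrium w q δ g π) (hδε : δ ≤ ε) :
    IsPartialEquilibrium w q ε g π where
  toIsReservePricing := h.toIsReservePricing
  stable b hb B := by linarith [h.stable b hb B]

theorem merge (h : IsPartialEquilibrium w q ε g π) (hc : c ∈ A) (hA : ∃ k, g k ∈ A) (hε : 0 ≤ ε)
    (hmax : ∀ B, ownerUtil (w c) g π B ≤ ownerUtil (w c) g π A) :
    IsPartialEquilibrium w q ε (mergeOwner g A c) (mergePrice π A c ε) where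
  toIsReservePricing := h.toIsReservePricing.merge hA hε c
  stable b hb B := by
    obtain ⟨B', hB'⟩ := exists_ownerUtil_merge_le (w b) g π A c hε B
    refine hB'.trans ?_
    by_cases hcb : c = b
    · subst hcb
      rw [ownerUtil_merge_of_mem _ _ _ _ (mem_singleton_self c), sub_add_cancel,
        union_eq_right.2 (singleton_subset_iff.2 hc)]
      exact hmax B'
    · obtain ⟨k, hk⟩ := hb
      have hkA : g k ∉ A := fun hkA ↦ hcb ((if_pos hkA).symm.trans hk)
      obtain rfl : g k = b := (if_neg hkA).symm.trans hk
      rw [ownerUtil_merge_of_notMem _ _ _ _ (by simpa using hcb),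
        sdiff_eq_self_of_disjoint (disjoint_singleton_left.2 hkA)]
      exact h.stable (g k) ⟨k, rfl⟩ B'

theorem exists_sum_eq_add [Fintype β] (h : IsPartialEquilibrium w q ε g π)
    (hw : w c ∅ = 0) (hq : 0 ≤ q) (hε : 0 ≤ ε) (hc : c ∉ Set.range g)
    (hB : 0 < ownerUtil (w c) g π B) :
    ∃ g' π', IsPartialEquilibrium w q ε g' π' ∧ ∑ b, π' b = ∑ b, π b + ε := by
  obtain ⟨A, -, hA⟩ := exists_max_image univ (ownerUtil (w c) g π) univ_nonempty
  have insert_max (B) : ownerUtil (w c) g π B ≤ ownerUtil (w c) g π (insert c A) :=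
    (hA B (mem_univ B)).trans_eq (h.ownerUtil_insert _ hc A).symm
  have exists_item : ∃ k, g k ∈ insert c A := by
    by_contra! hnone
    have util_pos := hB.trans_le (insert_max B)
    rw [ownerUtil, itemsOf, filter_false_of_mem fun k _ ↦ hnone k, hw] at util_pos
    linarith [sum_nonneg fun b (_ : b ∈ insert c A) ↦ h.nonneg hq b]
  exact ⟨_, _, h.merge (mem_insert_self c A) exists_item hε insert_max, by
    rw [sum_mergePrice_of_mem _ _ (mem_univ c), union_eq_left.2 (subset_univ _)]⟩

theorem price_le (h : IsPartialEquilibrium w q ε g π) (hmono : Monotone (w b))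
    (hempty : w b ∅ = 0) (hε : 0 ≤ ε) : π b ≤ w b univ + ε := by
  by_cases hb : b ∈ Set.range g
  · have util_nonneg := h.stable b hb ∅
    rw [ownerUtil_empty, hempty, ownerUtil, sum_singleton] at util_nonneg
    linarith [hmono (subset_univ (itemsOf g {b}))]
  · rw [h.eq_zero b hb]
    linarith [hmono (empty_subset univ)]

theorem exists_isEquilibrium [Finite β]
    (h : IsPartialEquilibrium w q ε g π) (hmono : ∀ b, Monotone (w b)) (hempty : ∀ b, w b ∅ = 0)
    (hq : 0 ≤ q) (hε : 0 < ε) : ∃ g' π', IsEquilibrium w q ε g' π' := by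
  have := Fintype.ofFinite β
  let revenues : Set ℝ := {r | ∃ g' π', IsPartialEquilibrium w q ε g' π' ∧ ∑ b, π' b = r}
  have bdd : BddAbove revenues := by
    refine ⟨∑ b, (w b univ + ε), ?_⟩
    rintro _ ⟨g', π', h', rfl⟩
    exact sum_le_sum fun b _ ↦ h'.price_le (hmono b) (hempty b) hε.le
  obtain ⟨_, ⟨g', π', h', rfl⟩, hlt⟩ :=
    exists_lt_of_lt_csSup (s := revenues) ⟨_, g, π, h, rfl⟩ (sub_lt_self _ hε)
  refine ⟨g', π', h'.toIsReservePricing, fun b B ↦ ?_⟩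
  by_cases hb : b ∈ Set.range g'
  · exact h'.stable b hb B
  · have own_util : ownerUtil (w b) g' π' {b} = 0 := by
      rw [← insert_empty_eq, h'.ownerUtil_insert _ hb, ownerUtil_empty, hempty]
    rw [own_util, zero_add]
    by_contra! hB
    obtain ⟨g'', π'', h'', hsum⟩ := h'.exists_sum_eq_add (hempty b) hq hε.le hb (hε.trans hB)
    linarith [le_csSup bdd ⟨g'', π'', h'', rfl⟩]

theorem exists_isEquilibrium_zero [Finite β]
    (h : IsPartialEquilibrium w q 0 g π) (hmono : ∀ b, Monotone (w b)) (hempty : ∀ b, w b ∅ = 0)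
    (hq : 0 ≤ q) : ∃ g' π', IsEquilibrium w q 0 g' π' := by
  obtain ⟨g', π', hπ', hstable⟩ := exists_forall_nonpos_of_forall_pos_exists_le
    (fun g' ↦ IsReservePricing.isCompact_setOf_le hq g' fun b ↦ w b univ + 1)
    (f := fun g' (bB : β × Finset β) π' ↦
      ownerUtil (w bB.1) g' π' bB.2 - ownerUtil (w bB.1) g' π' {bB.1})
    (fun g' bB ↦ (continuous_ownerUtil _ g' _).sub (continuous_ownerUtil _ g' _)) fun ε hε ↦ by
      have hδ : 0 < min ε 1 := lt_min hε one_pos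
      obtain ⟨g', π', h'⟩ := (h.mono hδ.le).exists_isEquilibrium hmono hempty hq hδ
      refine ⟨g', π', ⟨h'.toIsReservePricing, fun b ↦ ?_⟩, fun bB ↦ ?_⟩
      · linarith [h'.isPartialEquilibrium.price_le (hmono b) (hempty b) hδ.le, min_le_right ε 1]
      · linarith [h'.stable bB.1 bB.2, min_le_left ε 1]
  exact ⟨g', π', hπ'.1, fun b B ↦ by linarith [hstable (b, B)]⟩

end IsPartialEquilibrium

end Market

section Dummies

variable {α κ : Type*} [DecidableEq κ] {v : α → Finset κ → ℝ} {q : ℝ} {π : α ⊕ κ → ℝ}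
  {g : κ → α ⊕ κ}

/-- The valuation of the dummy owner `k`, who wants only item `k` and values it at the reserve
price `q`. -/
def dummyVal (q : ℝ) (k : κ) (S : Finset κ) : ℝ := if k ∈ S then q else 0

theorem dummyVal_empty (q : ℝ) (k : κ) : dummyVal q k ∅ = 0 :=
  if_neg (notMem_empty k)

theorem dummyVal_mono (hq : 0 ≤ q) (k : κ) : Monotone (dummyVal q k) := by
  intro S T hST
  unfold dummyVal
  split_ifs with hS hT
  exacts [le_rfl, absurd (hST hS) hT, hq, le_rfl]

theorem dummyVal_le (hq : 0 ≤ q) (k : κ) (S : Finset κ) : dummyVal q k S ≤ q := by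
  unfold dummyVal
  split_ifs
  exacts [le_rfl, hq]

variable [Fintype κ] [DecidableEq α]

theorem isPartialEquilibrium_inr (v : α → Finset κ → ℝ) (hq : 0 ≤ q) :
    IsPartialEquilibrium (Sum.elim v (dummyVal q)) q 0 Sum.inr (Sum.elim 0 fun _ ↦ q) where
  reserve_le
    | .inl i => by simp [itemsOf]
    | .inr k => by simp [itemsOf, filter_eq']
  eq_zero
    | .inl _, _ => rfl
    | .inr k, hk => absurd ⟨k, rfl⟩ hk
  stable := by
    rintro _ ⟨k, rfl⟩ B
    have price_nonneg (b : α ⊕ κ) : 0 ≤ Sum.elim (0 : α → ℝ) (fun _ ↦ q) b := by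
      cases b <;> simp [hq]
    have own_util :
        ownerUtil (dummyVal q k) Sum.inr (Sum.elim (0 : α → ℝ) fun _ ↦ q) {.inr k} = 0 := by
      simp [ownerUtil, dummyVal, itemsOf]
    rw [Sum.elim_inr, own_util, add_zero, ownerUtil, sub_nonpos]
    by_cases hk : .inr k ∈ B
    · exact (dummyVal_le hq k _).trans (single_le_sum (fun b _ ↦ price_nonneg b) hk)
    · rw [dummyVal, if_neg (by simpa [itemsOf] using hk)]
      exact sum_nonneg fun b _ ↦ price_nonneg b

theorem exists_isEquilibrium_dummyVal [Finite α] (hmono : ∀ i, Monotone (v i))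
    (hempty : ∀ i, v i ∅ = 0) (hq : 0 ≤ q) :
    ∃ g π, IsEquilibrium (Sum.elim v (dummyVal q)) q 0 g π :=
  (isPartialEquilibrium_inr v hq).exists_isEquilibrium_zero
    (Sum.forall.2 ⟨hmono, dummyVal_mono hq⟩) (Sum.forall.2 ⟨hempty, dummyVal_empty q⟩) hq

namespace IsEquilibrium

theorem price_inr_le (h : IsEquilibrium (Sum.elim v (dummyVal q)) q 0 g π) (hq : 0 ≤ q) (k : κ) :
    π (.inr k) ≤ q := by
  have util_nonneg := h.stable (.inr k) ∅
  rw [ownerUtil_empty, Sum.elim_inr, dummyVal_empty, ownerUtil, sum_singleton] at util_nonneg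
  linarith [dummyVal_le hq k (itemsOf g {.inr k})]

-- Otherwise the agent would buy the dummy's bundle, which costs at most `q`.
theorem inl_mem_range_of_inr (h : IsEquilibrium (Sum.elim v (dummyVal q)) q 0 g π) (hq : 0 ≤ q)
    {i : α} {k l : κ} (hmono : Monotone (v i)) (hempty : v i ∅ = 0) (hi : q < v i {k})
    (hk : g k = .inr l) : .inl i ∈ Set.range g := by
  by_contra hg
  have own_util : ownerUtil (v i) g π {.inl i} = 0 := by
    rw [← insert_empty_eq, h.ownerUtil_insert _ hg, ownerUtil_empty, hempty]
  have dummy_util := h.stable (.inl i) {.inr l}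
  rw [Sum.elim_inl, own_util, ownerUtil, sum_singleton] at dummy_util
  have item_mem : {k} ⊆ itemsOf g {.inr l} := by simp [itemsOf, hk]
  linarith [hmono item_mem, h.price_inr_le hq l]

theorem mul_card_le_two_mul_sum [Fintype α]
    (h : IsEquilibrium (Sum.elim v (dummyVal q)) q 0 g π)
    (hmono : ∀ i, Monotone (v i)) (hempty : ∀ i, v i ∅ = 0) (hq : 0 ≤ q) {o : κ → α}
    (ho : o.Injective) (hqo : ∀ k, q < v (o k) {k}) :
    q * Fintype.card κ ≤ 2 * ∑ i, π (.inl i) := by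
  let sold : Finset κ := itemsOf g (univ.map .inl)
  have exists_sold (k) (hk : k ∈ soldᶜ) : ∃ l ∈ sold, g l = .inl (o k) := by
    obtain ⟨m, hm⟩ : ∃ m, g k = .inr m := by
      cases hgk : g k with
      | inl i => simp [sold, itemsOf, hgk] at hk
      | inr m => exact ⟨m, rfl⟩
    obtain ⟨l, hl⟩ := h.inl_mem_range_of_inr hq (hmono (o k)) (hempty (o k)) (hqo k) hm
    exact ⟨l, by simp [sold, itemsOf, hl], hl⟩
  have card_unsold_le : #soldᶜ ≤ #sold := by
    choose! f hf hgf using exists_sold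
    refine card_le_card_of_injOn f hf fun k hk l hl hkl ↦ ho (Sum.inl_injective (β := κ) ?_)
    rw [← hgf k hk, hkl, hgf l hl]
  have card_le : (Fintype.card κ : ℝ) ≤ 2 * #sold := by
    rw [← card_add_card_compl sold]
    exact_mod_cast (by lia : #sold + #soldᶜ ≤ 2 * #sold)
  calc q * Fintype.card κ ≤ q * (2 * #sold) := by gcongr
    _ = 2 * (q * #sold) := by ring
    _ ≤ 2 * ∑ b ∈ univ.map .inl, π b := by gcongr; exact h.mul_card_le_sum _
    _ = 2 * ∑ i, π (.inl i) := by rw [sum_map]; rfl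

end IsEquilibrium

end Dummies

theorem itemsOf_map_inl_sup {ι α κ δ : Type*} [DecidableEq ι] [DecidableEq α] [DecidableEq δ]
    [Fintype κ] (g : κ → α ⊕ δ) (W : κ → Finset ι) (A : Finset α) :
    (itemsOf g (A.map .inl)).sup W = A.sup fun i ↦ (itemsOf g {.inl i}).sup W := by
  ext x
  simp only [mem_sup, itemsOf, mem_filter, mem_univ, true_and, mem_map, mem_singleton,
    Function.Embedding.inl_apply]
  grind

section Auction

variable {ι : Type} [Fintype ι] [DecidableEq ι] {n : ℕ} {v : Fin n → Finset ι → ℝ}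
  {X : Fin n → Finset ι} {π : Fin n → ℝ} {S : Finset (Finset ι)} {i j : Fin n}

theorem ValidVal.monotone {u : Finset ι → ℝ} (hu : ValidVal u) : Monotone u :=
  fun S T ↦ hu.2.1 S T

theorem ne_unalloc (hi : X i ≠ ∅) : X i ≠ unalloc X := fun h ↦
  hi (disjoint_self_iff_empty _ |>.1 <| by
    nth_rw 2 [h]
    exact disjoint_sdiff.mono_left (le_sup (f := X) (mem_univ i)))

theorem IsAlloc.eq_of_eq (hX : IsAlloc X) (hi : X i ≠ ∅) (hij : X i = X j) : i = j := by
  by_contra hne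
  have disj := hX i j hne
  rw [← hij, disjoint_self_iff_empty] at disj
  exact hi disj

/-- Bundle prices charging agent `i` the price `π i` for `X i`; the sum has a single term when `B`
is a nonempty bundle of an allocation. The unallocated bundle is priced beyond every agent's
means. -/
def bundlePrice (v : Fin n → Finset ι → ℝ) (X : Fin n → Finset ι) (π : Fin n → ℝ)
    (B : Finset ι) : ℝ :=
  if B = unalloc X then ∑ i, v i univ else ∑ i with X i = B, π i

theorem bundlePrice_nonneg (hv : ∀ i, ValidVal (v i)) (hπ : ∀ i, 0 ≤ π i) (B : Finset ι) :
    0 ≤ bundlePrice v X π B := by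
  unfold bundlePrice
  split_ifs
  exacts [sum_nonneg fun i _ ↦ (hv i).1 univ, sum_nonneg fun i _ ↦ hπ i]

theorem IsAlloc.bundlePrice_eq (hX : IsAlloc X) (v : Fin n → Finset ι → ℝ) (π : Fin n → ℝ)
    (hi : X i ≠ ∅) : bundlePrice v X π (X i) = π i := by
  have fiber_eq : ({j | X j = X i} : Finset (Fin n)) = {i} := by
    ext j
    simpa using ⟨fun hj ↦ (hX.eq_of_eq hi hj.symm).symm, fun hj ↦ hj ▸ rfl⟩
  rw [bundlePrice, if_neg (ne_unalloc hi), fiber_eq, sum_singleton]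

theorem IsAlloc.revenue_bundlePrice (hX : IsAlloc X) (v : Fin n → Finset ι → ℝ)
    (hπ : ∀ i, X i = ∅ → π i = 0) : Revenue X (bundlePrice v X π) = ∑ i, π i := by
  rw [Revenue, sum_congr rfl fun i hi ↦ hX.bundlePrice_eq v π (mem_filter.1 hi).2]
  exact sum_filter_of_ne fun i _ hi hXi ↦ hi (hπ i hXi)

theorem IsAlloc.util_own_bundlePrice (hX : IsAlloc X) (v : Fin n → Finset ι → ℝ)
    (hπ : ∀ i, X i = ∅ → π i = 0) (u : Finset ι → ℝ) (i : Fin n) :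
    util u (bundlePrice v X π) (own X i) = u (X i) - π i := by
  by_cases hi : X i = ∅
  · simp [util, own, hi, hπ i hi]
  · simp [util, own, hi, hX.bundlePrice_eq v π hi]

theorem util_bundlePrice_nonpos (hv : ∀ i, ValidVal (v i)) (hπ : ∀ i, 0 ≤ π i)
    (hS : unalloc X ∈ S) (i : Fin n) : util (v i) (bundlePrice v X π) S ≤ 0 := by
  refine sub_nonpos.2 ?_
  calc v i (S.sup id) ≤ v i univ := (hv i).monotone (subset_univ _)
    _ ≤ ∑ j, v j univ := single_le_sum (f := fun j ↦ v j univ) (fun j _ ↦ (hv j).1 _) (mem_univ i)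
    _ = bundlePrice v X π (unalloc X) := (if_pos rfl).symm
    _ ≤ ∑ B ∈ S, bundlePrice v X π B := single_le_sum (fun B _ ↦ bundlePrice_nonneg hv hπ B) hS

theorem IsAlloc.exists_util_bundlePrice_eq (hX : IsAlloc X) (v : Fin n → Finset ι → ℝ)
    (π : Fin n → ℝ) (u : Finset ι → ℝ) (hS : S ⊆ Bundles X) (hunalloc : unalloc X ∉ S) :
    ∃ A : Finset (Fin n), util u (bundlePrice v X π) S = u (A.sup X) - ∑ i ∈ A, π i := by
  let A : Finset (Fin n) := {i | X i ∈ S}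
  have ne_empty (i) (hi : i ∈ A) : X i ≠ ∅ := ne_of_mem_erase (hS (mem_filter.1 hi).2)
  have image_eq : A.image X = S := by
    refine Subset.antisymm (image_subset_iff.2 fun i hi ↦ (mem_filter.1 hi).2) fun B hB ↦ ?_
    obtain rfl | hBX := mem_insert.1 (mem_of_mem_erase (hS hB))
    · exact absurd hB hunalloc
    · obtain ⟨i, -, rfl⟩ := mem_image.1 hBX
      exact mem_image_of_mem X (mem_filter.2 ⟨mem_univ i, hB⟩)
  refine ⟨A, ?_⟩
  rw [util, ← image_eq, sup_image, Function.id_comp,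
    sum_image fun i hi j _ ↦ hX.eq_of_eq (ne_empty i hi)]
  exact congrArg _ (sum_congr rfl fun i hi ↦ hX.bundlePrice_eq v π (ne_empty i hi))

theorem IsAlloc.isCWE_bundlePrice (hX : IsAlloc X) (hv : ∀ i, ValidVal (v i))
    (hπ_nonneg : ∀ i, 0 ≤ π i) (hπ_zero : ∀ i, X i = ∅ → π i = 0)
    (hstable : ∀ i (A : Finset (Fin n)), v i (A.sup X) - ∑ j ∈ A, π j ≤ v i (X i) - π i) :
    IsCWE v X (bundlePrice v X π) := by
  refine ⟨hX, fun B _ ↦ bundlePrice_nonneg hv hπ_nonneg B, fun i S hS ↦ ?_⟩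
  rw [hX.util_own_bundlePrice v hπ_zero]
  by_cases hunalloc : unalloc X ∈ S
  · have own_util_nonneg : 0 ≤ v i (X i) - π i := by simpa [(hv i).2.2] using hstable i ∅
    exact (util_bundlePrice_nonpos hv hπ_nonneg hunalloc i).trans own_util_nonneg
  · obtain ⟨A, hA⟩ := hX.exists_util_bundlePrice_eq v π (v i) hS hunalloc
    exact hA.trans_le (hstable i A)

theorem IsEquilibrium.exists_isCWE {κ δ : Type*} [Fintype κ] [DecidableEq δ]
    {d : δ → Finset κ → ℝ} {q : ℝ} {g : κ → Fin n ⊕ δ} {π : Fin n ⊕ δ → ℝ} {W : κ → Finset ι}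
    (h : IsEquilibrium (Sum.elim (fun i S ↦ v i (S.sup W)) d) q 0 g π)
    (hv : ∀ i, ValidVal (v i)) (hq : 0 ≤ q) (hW : Pairwise (Function.onFun Disjoint W))
    (hW_ne : ∀ k, W k ≠ ∅) :
    ∃ X p, IsCWE v X p ∧ Revenue X p = ∑ i, π (.inl i) := by
  let X (i : Fin n) : Finset ι := (itemsOf g {.inl i}).sup W
  have alloc : IsAlloc X := by
    refine fun i j hij ↦ Finset.disjoint_sup_left.2 fun k hk ↦
      Finset.disjoint_sup_right.2 fun l hl ↦ hW ?_
    rintro rfl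
    simp only [itemsOf, mem_filter, mem_univ, true_and, mem_singleton] at hk hl
    exact hij (Sum.inl_injective (hk.symm.trans hl))
  have price_zero (i) (hi : X i = ∅) : π (.inl i) = 0 := by
    refine h.eq_zero _ ?_
    rintro ⟨k, hk⟩
    exact hW_ne k ((Finset.sup_eq_bot_iff _ _).1 hi k (by simp [itemsOf, hk]))
  have stable (i) (A : Finset (Fin n)) :
      v i (A.sup X) - ∑ j ∈ A, π (.inl j) ≤ v i (X i) - π (.inl i) := by
    simpa [ownerUtil, itemsOf_map_inl_sup] using h.stable (.inl i) (A.map .inl)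
  exact ⟨X, _, alloc.isCWE_bundlePrice hv (fun i ↦ h.nonneg hq _) price_zero stable,
    alloc.revenue_bundlePrice v price_zero⟩

theorem exists_isCWE_mul_card_le_two_mul_revenue (hv : ∀ i, ValidVal (v i)) {Z : Fin n → Finset ι}
    (hZ : IsAlloc Z) {q : ℝ} (hq : 0 ≤ q) :
    ∃ X p, IsCWE v X p ∧ q * #{j | q < v j (Z j)} ≤ 2 * Revenue X p := by
  let W (k : {j // q < v j (Z j)}) : Finset ι := Z k
  have hmono (i) : Monotone fun S : Finset _ ↦ v i (S.sup W) :=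
    fun S T hST ↦ (hv i).monotone (sup_mono hST)
  have hempty (i) : v i ((∅ : Finset _).sup W) = 0 := (hv i).2.2
  obtain ⟨g, π, h⟩ := exists_isEquilibrium_dummyVal hmono hempty hq
  have hW_ne (k) : W k ≠ ∅ := fun hk ↦ by
    have q_lt : q < v k (W k) := k.2
    rw [hk, (hv k).2.2] at q_lt
    exact q_lt.not_ge hq
  obtain ⟨X, p, hCWE, hrev⟩ := h.exists_isCWE hv hq
    (fun k l hkl ↦ hZ k l (Subtype.coe_injective.ne hkl)) hW_ne
  refine ⟨X, p, hCWE, ?_⟩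
  rw [hrev, ← Fintype.card_subtype]
  exact h.mul_card_le_two_mul_sum hmono hempty hq Subtype.coe_injective fun k ↦ by
    simpa only [sup_singleton] using k.2

theorem exists_isAlloc_forall_SW_le (v : Fin n → Finset ι → ℝ) :
    ∃ Z, IsAlloc Z ∧ ∀ Z', IsAlloc Z' → SW v Z' ≤ SW v Z :=
  Set.exists_max_image {Z | IsAlloc Z} (SW v) (Set.toFinite _)
    ⟨fun _ ↦ ∅, fun _ _ _ ↦ disjoint_empty_left _⟩

theorem IsCWE.revenue_nonneg {p : Finset ι → ℝ} (h : IsCWE v X p) : 0 ≤ Revenue X p :=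
  sum_nonneg fun i hi ↦ h.2.1 (X i) <| mem_erase_of_ne_of_mem (mem_filter.1 hi).2 <|
    mem_insert_of_mem (mem_image_of_mem X (mem_univ i))

theorem exists_cwe_log_revenue_of_optimal_general (hv : ∀ i, ValidVal (v i)) {c : ℝ} (hc : 2 < c) :
    ∃ X p, IsCWE v X p ∧ ∀ Z, IsAlloc Z → SW v Z ≤ c * harmonic n * Revenue X p := by
  obtain ⟨Z, hZ, hZmax⟩ := exists_isAlloc_forall_SW_le v
  obtain ⟨t, ht, hSW⟩ := exists_nonneg_sum_le_harmonic_mul_card_mul (s := univ)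
    (a := fun i ↦ v i (Z i)) fun i _ ↦ (hv i).1 _
  rw [card_fin] at hSW
  let q := 2 / c * t
  obtain ⟨X, p, hCWE, hrev⟩ :=
    exists_isCWE_mul_card_le_two_mul_revenue hv hZ (q := q) (by positivity)
  have card_mul_le : #{i | t ≤ v i (Z i)} * t ≤ #{i | q < v i (Z i)} * t := by
    obtain rfl | ht_pos := ht.eq_or_lt
    · simp
    · have q_lt : q < t := mul_lt_of_lt_one_left ht_pos ((div_lt_one (by linarith)).2 hc)
      gcongr
  have harmonic_nonneg : (0 : ℝ) ≤ harmonic n := by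
    unfold harmonic
    positivity
  refine ⟨X, p, hCWE, fun Z' hZ' ↦ (hZmax Z' hZ').trans ?_⟩
  calc SW v Z ≤ harmonic n * (#{i | t ≤ v i (Z i)} * t) := hSW
    _ ≤ harmonic n * (#{i | q < v i (Z i)} * t) := by gcongr
    _ = harmonic n * (c / 2 * (q * #{i | q < v i (Z i)})) := by simp only [q]; field_simp
    _ ≤ harmonic n * (c / 2 * (2 * Revenue X p)) := by gcongr
    _ = c * harmonic n * Revenue X p := by ring

end Auction

/-- every valuation profile with `n ≥ 1` agents admits a CWE extracting revenue
at least `(max_Z SW(Z)) / (16·⌈log₂(2n)⌉)`, the maximum being over all allocations `Z`. -/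
theorem exists_cwe_log_revenue_of_optimal {ι : Type} [Fintype ι] [DecidableEq ι] (n : ℕ)
    (hn : 1 ≤ n)
    (v : Fin n → Finset ι → ℝ) (hv : ∀ i, ValidVal (v i)) :
    ∃ (X : Fin n → Finset ι) (p : Finset ι → ℝ),
      IsCWE v X p ∧
        ∀ Z : Fin n → Finset ι, IsAlloc Z →
          Revenue X p ≥ SW v Z / (16 * (Nat.clog 2 (2 * n) : ℝ)) := by
  obtain ⟨X, p, hCWE, hrev⟩ := exists_cwe_log_revenue_of_optimal_general hv (c := 16) (by norm_num)
  have clog_pos : 0 < Nat.clog 2 (2 * n) := Nat.clog_pos one_lt_two (by lia)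
  refine ⟨X, p, hCWE, fun Z hZ ↦ (div_le_iff₀' (by positivity)).2 ?_⟩
  calc SW v Z ≤ 16 * harmonic n * Revenue X p := hrev Z hZ
    _ ≤ 16 * Nat.clog 2 (2 * n) * Revenue X p := by
      gcongr
      exacts [hCWE.revenue_nonneg, harmonic_le_clog_two_mul (by lia)]
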